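/- Let p : ℙ¹ → ℙⁿ parameterize a non-degenerate rational curve of degree d > n by homogeneous polynomials of degree d. Then the osculating determinant Δ_p(s,t) = det[∂ⁿp/∂sⁿ, ∂ⁿp/∂sⁿ⁻¹∂t, …, ∂ⁿp/∂tⁿ] is a nonzero homogeneous form of degree (d−n)(n+1) in (s,t); in particular, the curve has only finitely many stall points. -/

import Mathlib

open Projectivization MvPolynomial

/-- The complex projective line `ℙ¹`. -/
abbrev P1 := Projectivization ℂ (Fin 2 → ℂ)

/-- The osculating determinant `Δ_p = det[∂ⁿp/∂sⁿ, ∂ⁿp/∂sⁿ⁻¹∂t, …, ∂ⁿp/∂tⁿ]`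
of a tuple `p` of `n+1` binary forms (in the variables `s = x₀`, `t = x₁`);
its zeros are the stall points of the parameterized curve. -/
noncomputable def oscDet (n : ℕ) (p : Fin (n + 1) → MvPolynomial (Fin 2) ℂ) :
    MvPolynomial (Fin 2) ℂ :=
  Matrix.det (Matrix.of fun (i j : Fin (n + 1)) =>
    (fun f => pderiv (0 : Fin 2) f)^[n - (j : ℕ)]
      ((fun f => pderiv (1 : Fin 2) f)^[(j : ℕ)] (p i)))

open scoped MonomialOrder

/-!
The operator `s ^ k * t ^ l * ∂ᵏ⁺ˡ/∂sᵏ∂tˡ` is diagonal on monomials: it multiplies `s ^ a * t ^ b`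
by `(a)ₖ (b)ₗ`, where `(x)ₖ` is the falling factorial. A change of basis of the span of the `pᵢ`
only multiplies `Δ_p` by a nonzero constant, so the leading monomials `s ^ aᵢ * t ^ bᵢ` of the `pᵢ`
may be assumed pairwise distinct. Multiplying the `j`-th column of the osculating matrix by
`s ^ (n - j) * t ^ j`, the coefficient of `∏ᵢ s ^ aᵢ * t ^ bᵢ` in the determinant is then, up to the
product of the leading coefficients, `det ((aᵢ)ₙ₋ⱼ (bᵢ)ⱼ)`. Since `aᵢ = d - bᵢ`, the entries are the
values at the `n + 1` points `bᵢ` of the polynomials `(d - x)ₙ₋ⱼ (x)ⱼ`, which have degree at most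
`n` and are linearly independent; hence that determinant is nonzero.
-/

section LeadingTerms

variable {σ : Type*} (mo : MonomialOrder σ)

theorem degree_le_of_support_subset {R : Type*} [CommSemiring R] {f g : MvPolynomial σ R}
    (h : f.support ⊆ g.support) : mo.degree f ≼[mo] mo.degree g :=
  mo.degree_le_iff.2 fun _ hc => mo.le_degree (h hc)

theorem coeff_sum_prod_of_degree_le {R ι : Type*} [CommSemiring R] {s : Finset ι}
    {f : ι → MvPolynomial σ R} {a : ι → σ →₀ ℕ} (h : ∀ i ∈ s, mo.degree (f i) ≼[mo] a i) :
    coeff (∑ i ∈ s, a i) (∏ i ∈ s, f i) = ∏ i ∈ s, coeff (a i) (f i) := by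
  classical
  induction s using Finset.induction_on with
  | empty => simp
  | insert i s hi ih =>
    have hs := fun k hk => h k (Finset.mem_insert_of_mem hk)
    have hprod : mo.degree (∏ k ∈ s, f k) ≼[mo] ∑ k ∈ s, a k :=
      mo.degree_prod_le.trans (by simpa only [map_sum] using Finset.sum_le_sum hs)
    rw [Finset.sum_insert hi, Finset.prod_insert hi, Finset.prod_insert hi,
      mo.coeff_mul_of_add_of_degree_le (h i (Finset.mem_insert_self i s)) hprod, ih hs]

theorem coeff_sum_det_of_degree_le {R ι : Type*} [CommRing R] [Fintype ι] [DecidableEq ι]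
    {M : Matrix ι ι (MvPolynomial σ R)} {a : ι → σ →₀ ℕ}
    (h : ∀ i j, mo.degree (M i j) ≼[mo] a i) :
    coeff (∑ i, a i) M.det = (Matrix.of fun i j => coeff (a i) (M i j)).det := by
  simp only [Matrix.det_apply, coeff_sum, Matrix.of_apply]
  refine Finset.sum_congr rfl fun τ _ => ?_
  rw [Units.smul_def, Units.smul_def, coeff_smul, ← Equiv.sum_comp τ,
    coeff_sum_prod_of_degree_le mo fun i _ => h (τ i) i]

theorem exists_injective_degree_of_le_finrank {K : Type*} [Field K]
    {V : Submodule K (MvPolynomial σ K)} {r : ℕ} (hr : r ≤ Module.finrank K V) :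
    ∃ f : Fin r → MvPolynomial σ K,
      (∀ i, f i ∈ V) ∧ (∀ i, f i ≠ 0) ∧ Function.Injective fun i => mo.degree (f i) := by
  let S : Set (σ →₀ ℕ) := {a | ∃ f ∈ V, f ≠ 0 ∧ mo.degree f = a}
  let coeffs : V →ₗ[K] S → K := LinearMap.pi fun a => lcoeff K (a : σ →₀ ℕ) ∘ₗ V.subtype
  have coeffs_injective : Function.Injective coeffs := by
    refine (injective_iff_map_eq_zero coeffs).2 fun f hf => by_contra fun hne => ?_
    have hf0 : (f : MvPolynomial σ K) ≠ 0 := by simpa using hne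
    exact mo.leadingCoeff_ne_zero_iff.2 hf0 (congrFun hf ⟨_, f, f.2, hf0, rfl⟩)
  obtain ⟨e⟩ : Nonempty (Fin r ↪ S) := by
    cases finite_or_infinite S with
    | inl _ =>
      have := Fintype.ofFinite S
      refine Function.Embedding.nonempty_of_card_le ?_
      simpa using hr.trans (LinearMap.finrank_le_finrank_of_injective coeffs_injective)
    | inr _ => exact ⟨Fin.valEmbedding.trans (Infinite.natEmbedding S)⟩
  choose f hfV hf0 hdeg using fun i => (e i).2
  exact ⟨f, hfV, hf0, fun i j hij => e.injective (Subtype.ext (by simpa only [hdeg] using hij))⟩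

end LeadingTerms

section Indicial

variable {R : Type*} [CommRing R]

theorem det_eval_ne_zero_of_linearIndependent [IsDomain R] {ι : Type*} [Fintype ι] [DecidableEq ι]
    {q : ι → Polynomial R} (hq : LinearIndependent R q)
    (hdeg : ∀ j, (q j).degree < Fintype.card ι) {x : ι → R} (hx : Function.Injective x) :
    (Matrix.of fun i j => (q j).eval (x i)).det ≠ 0 := by
  intro hdet
  obtain ⟨c, hc, hzero⟩ := Matrix.exists_mulVec_eq_zero_iff.2 hdet
  refine hc (funext (Fintype.linearIndependent_iff.1 hq c ?_))
  refine Polynomial.eq_zero_of_degree_lt_of_eval_index_eq_zero Finset.univ hx.injOn ?_ fun i _ => ?_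
  · exact (Polynomial.degree_sum_le _ _).trans_lt ((Finset.sup_lt_iff (WithBot.bot_lt_coe _)).2
      fun j _ => (Polynomial.degree_smul_le _ _).trans_lt (hdeg j))
  · simpa [Matrix.mulVec, dotProduct, Polynomial.eval_finsetSum, mul_comm] using congrFun hzero i

/-- The polynomial `(d - x)ₖ (x)ₗ`, a product of falling factorials. Its value at `x = b` is the
eigenvalue of `s ^ k * t ^ l * ∂ᵏ⁺ˡ/∂sᵏ∂tˡ` on the monomial `s ^ (d - b) * t ^ b`. -/
noncomputable def indicialPoly (R : Type*) [CommRing R] (d k l : ℕ) : Polynomial R :=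
  (descPochhammer R k).comp (Polynomial.C (d : R) - Polynomial.X) * descPochhammer R l

theorem eval_indicialPoly {a b d : ℕ} (h : a + b = d) (k l : ℕ) :
    (indicialPoly R d k l).eval (b : R) = a.descFactorial k * b.descFactorial l := by
  simp [indicialPoly, ← h, ← descPochhammer_eval_eq_descFactorial]

theorem natDegree_indicialPoly_le [IsDomain R] (d k l : ℕ) :
    (indicialPoly R d k l).natDegree ≤ k + l := by
  have hlin : (Polynomial.C (d : R) - Polynomial.X).natDegree ≤ 1 :=
    (Polynomial.natDegree_sub_le _ _).trans (by simp)
  calc (indicialPoly R d k l).natDegree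
      ≤ k * (Polynomial.C (d : R) - Polynomial.X).natDegree + l := by
        refine Polynomial.natDegree_mul_le.trans_eq ?_
        rw [Polynomial.natDegree_comp, descPochhammer_natDegree, descPochhammer_natDegree]
    _ ≤ k * 1 + l := by gcongr
    _ = k + l := by rw [mul_one]

variable [IsDomain R] [CharZero R]

theorem linearIndependent_indicialPoly {n d : ℕ} (h : n ≤ d) :
    LinearIndependent R fun j : Fin (n + 1) => indicialPoly R d (n - j) j := by
  let E : Matrix (Fin (n + 1)) (Fin (n + 1)) R :=
    Matrix.of fun j k => (indicialPoly R d (n - j) j).eval ((k : ℕ) : R)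
  have hE (j k : Fin (n + 1)) :
      E j k = (d - k).descFactorial (n - j) * (k : ℕ).descFactorial j :=
    eval_indicialPoly (Nat.sub_add_cancel (k.is_le.trans h)) _ _
  have htri : E.IsUpperTriangular := fun j k (hkj : k < j) => by
    simp [hE, Nat.descFactorial_of_lt (Fin.lt_def.1 hkj)]
  have hdet : E.det ≠ 0 := by
    rw [Matrix.det_of_isUpperTriangular htri]
    refine Finset.prod_ne_zero_iff.2 fun k _ => ?_
    rw [hE, ← Nat.cast_mul, Nat.cast_ne_zero]
    simp only [ne_eq, mul_eq_zero, Nat.descFactorial_eq_zero_iff_lt]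
    omega
  exact LinearIndependent.of_comp
    (LinearMap.pi fun k : Fin (n + 1) => Polynomial.leval ((k : ℕ) : R))
    (Matrix.linearIndependent_rows_of_det_ne_zero hdet)

theorem det_descFactorial_mul_descFactorial_ne_zero {n d : ℕ} {a b : Fin (n + 1) → ℕ}
    (hb : Function.Injective b) (hab : ∀ i, a i + b i = d) :
    (Matrix.of fun i j : Fin (n + 1) =>
      ((a i).descFactorial (n - j) * (b i).descFactorial j : R)).det ≠ 0 := by
  have hnd : n ≤ d := by
    have hbd (i : Fin (n + 1)) : b i < d + 1 := by have := hab i; omega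
    have hinj : Function.Injective fun i => (⟨b i, hbd i⟩ : Fin (d + 1)) :=
      fun i j hij => hb (Fin.mk.inj hij)
    simpa using Fintype.card_le_of_injective _ hinj
  have hdeg (j : Fin (n + 1)) :
      (indicialPoly R d (n - j) j).degree < Fintype.card (Fin (n + 1)) := by
    refine Polynomial.degree_le_natDegree.trans_lt (Nat.cast_lt.2 ?_)
    refine (natDegree_indicialPoly_le d _ _).trans_lt ?_
    rw [Fintype.card_fin]
    omega
  simp only [← eval_indicialPoly (hab _)]
  exact det_eval_ne_zero_of_linearIndependent (linearIndependent_indicialPoly hnd) hdeg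
    (Nat.cast_injective.comp hb)

end Indicial

section MixedDerivatives

theorem coeff_pderiv_pow {σ R : Type*} [CommSemiring R] (i : σ) (k : ℕ) (f : MvPolynomial σ R)
    (m : σ →₀ ℕ) :
    coeff m (((pderiv i).toLinearMap ^ k) f) =
      (m i + k).descFactorial k * coeff (m + Finsupp.single i k) f := by
  induction k generalizing m with
  | zero => simp
  | succ k ih =>
    have hshift : (m i + (k + 1)).descFactorial (k + 1) =
        (m i + 1) * (m i + 1 + k).descFactorial k := by
      rw [Nat.descFactorial_succ, add_right_comm, add_assoc, Nat.sub_eq_of_eq_add]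
      omega
    rw [pow_succ', Module.End.mul_apply, Derivation.coeFn_coe, coeff_pderiv,
      ih, hshift, add_assoc, ← Finsupp.single_add, add_comm 1 k]
    simp only [Finsupp.add_apply, Finsupp.single_eq_same]
    push_cast
    ring

theorem isHomogeneous_pderiv_pow {σ R : Type*} [CommSemiring R] {f : MvPolynomial σ R} {d : ℕ}
    (hf : f.IsHomogeneous d) (i : σ) (k : ℕ) :
    (((pderiv i).toLinearMap ^ k) f).IsHomogeneous (d - k) := by
  induction k with
  | zero => simpa
  | succ k ih =>
    rw [pow_succ', Module.End.mul_apply]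
    exact ih.pderiv

/-- The operator `∂ᵏ⁺ˡ/∂sᵏ∂tˡ` on polynomials in `s = x₀`, `t = x₁`. -/
noncomputable def mixedPderiv (R : Type*) [CommSemiring R] (k l : ℕ) :
    Module.End R (MvPolynomial (Fin 2) R) :=
  (pderiv 0).toLinearMap ^ k * (pderiv 1).toLinearMap ^ l

variable {R : Type*} [CommSemiring R]

theorem isHomogeneous_mixedPderiv {f : MvPolynomial (Fin 2) R} {d : ℕ} (hf : f.IsHomogeneous d)
    (k l : ℕ) : (mixedPderiv R k l f).IsHomogeneous (d - (k + l)) := by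
  rw [add_comm, ← Nat.sub_sub]
  exact isHomogeneous_pderiv_pow (isHomogeneous_pderiv_pow hf 1 l) 0 k

theorem coeff_monomial_mul_mixedPderiv (k l : ℕ) (f : MvPolynomial (Fin 2) R) (m : Fin 2 →₀ ℕ) :
    coeff m (monomial (Finsupp.single 0 k + Finsupp.single 1 l) 1 * mixedPderiv R k l f) =
      (m 0).descFactorial k * (m 1).descFactorial l * coeff m f := by
  have hle : Finsupp.single 0 k + Finsupp.single 1 l ≤ m ↔ k ≤ m 0 ∧ l ≤ m 1 := by
    simp [Finsupp.le_def, Fin.forall_fin_two]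
  rw [coeff_monomial_mul', one_mul]
  split_ifs with h
  · obtain ⟨hk, hl⟩ := hle.1 h
    rw [mixedPderiv, Module.End.mul_apply, coeff_pderiv_pow, coeff_pderiv_pow, add_assoc,
      tsub_add_cancel_of_le h]
    simp [hk, hl, mul_assoc]
  · rcases not_and_or.1 (mt hle.2 h) with hk | hl
    · simp [Nat.descFactorial_of_lt (not_le.1 hk)]
    · simp [Nat.descFactorial_of_lt (not_le.1 hl)]

end MixedDerivatives

section OsculatingMatrix

/-- The matrix whose determinant is `Δ_p`: the `j`-th column consists of the derivatives
`∂ⁿpᵢ/∂sⁿ⁻ʲ∂tʲ`. -/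
noncomputable def osculatingMatrix {R : Type*} [CommSemiring R] {n : ℕ}
    (p : Fin (n + 1) → MvPolynomial (Fin 2) R) :
    Matrix (Fin (n + 1)) (Fin (n + 1)) (MvPolynomial (Fin 2) R) :=
  Matrix.of fun i j => mixedPderiv R (n - j) j (p i)

theorem oscDet_eq_det_osculatingMatrix {n : ℕ} (p : Fin (n + 1) → MvPolynomial (Fin 2) ℂ) :
    oscDet n p = (osculatingMatrix p).det := by
  simp only [oscDet, osculatingMatrix, mixedPderiv, Module.End.mul_apply, Module.End.pow_apply]
  rfl

theorem osculatingMatrix_sum_smul {R : Type*} [CommSemiring R] {n : ℕ}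
    (c : Matrix (Fin (n + 1)) (Fin (n + 1)) R) (p : Fin (n + 1) → MvPolynomial (Fin 2) R) :
    osculatingMatrix (fun i => ∑ k, c i k • p k) = c.map C * osculatingMatrix p := by
  ext1 i j
  simp only [osculatingMatrix, Matrix.of_apply, Matrix.mul_apply, Matrix.map_apply, map_sum,
    map_smul, ← smul_eq_C_mul]

theorem isHomogeneous_det_osculatingMatrix {R : Type*} [CommRing R] {n d : ℕ}
    {p : Fin (n + 1) → MvPolynomial (Fin 2) R} (hp : ∀ i, (p i).IsHomogeneous d) :
    (osculatingMatrix p).det.IsHomogeneous ((d - n) * (n + 1)) := by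
  rw [Matrix.det_apply]
  refine IsHomogeneous.sum _ _ _ fun τ _ => ?_
  have hentry (i j : Fin (n + 1)) : (osculatingMatrix p i j).IsHomogeneous (d - n) := by
    simpa only [osculatingMatrix, Matrix.of_apply, Nat.sub_add_cancel j.is_le] using
      isHomogeneous_mixedPderiv (hp i) (n - j) j
  have hprod : (∏ j, osculatingMatrix p (τ j) j).IsHomogeneous ((d - n) * (n + 1)) := by
    simpa [mul_comm] using IsHomogeneous.prod Finset.univ _ _ fun j _ => hentry (τ j) j
  exact (homogeneousSubmodule (Fin 2) R _).smul_of_tower_mem (Equiv.Perm.sign τ : ℤ) hprod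

theorem det_osculatingMatrix_ne_zero_of_injective_degree {R : Type*} [CommRing R] [IsDomain R]
    [CharZero R] (mo : MonomialOrder (Fin 2)) {n d : ℕ} {f : Fin (n + 1) → MvPolynomial (Fin 2) R}
    (hf : ∀ i, (f i).IsHomogeneous d) (hf0 : ∀ i, f i ≠ 0)
    (hinj : Function.Injective fun i => mo.degree (f i)) : (osculatingMatrix f).det ≠ 0 := by
  let shift (j : Fin (n + 1)) : MvPolynomial (Fin 2) R :=
    monomial (Finsupp.single 0 (n - j : ℕ) + Finsupp.single 1 (j : ℕ)) 1
  let N := Matrix.of fun i j => shift j * osculatingMatrix f i j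
  have hcoeff (i j : Fin (n + 1)) (m : Fin 2 →₀ ℕ) : coeff m (N i j) =
      (m 0).descFactorial (n - j) * (m 1).descFactorial j * coeff m (f i) :=
    coeff_monomial_mul_mixedPderiv _ _ _ _
  have hdeg (i j : Fin (n + 1)) : mo.degree (N i j) ≼[mo] mo.degree (f i) := by
    refine degree_le_of_support_subset mo fun m hm => ?_
    rw [mem_support_iff, hcoeff] at hm
    exact mem_support_iff.2 (right_ne_zero_of_mul hm)
  have hexp (i : Fin (n + 1)) : mo.degree (f i) 0 + mo.degree (f i) 1 = d := by
    rw [← Fin.sum_univ_two, ← Finsupp.degree_eq_sum]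
    exact ((hf i).degree_eq_sum_deg_support (mo.degree_mem_support (hf0 i))).symm
  have hinj₁ : Function.Injective fun i => mo.degree (f i) 1 :=
    fun i j (h₁ : mo.degree (f i) 1 = mo.degree (f j) 1) => by
      have h₀ : mo.degree (f i) 0 = mo.degree (f j) 0 :=
        Nat.add_right_cancel ((hexp i).trans (h₁ ▸ (hexp j).symm))
      exact hinj (Finsupp.ext (Fin.forall_fin_two.2 ⟨h₀, h₁⟩))
  let E : Matrix (Fin (n + 1)) (Fin (n + 1)) R := Matrix.of fun i j =>
    ((mo.degree (f i) 0).descFactorial (n - j) * (mo.degree (f i) 1).descFactorial j)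
  have hN : coeff (∑ i, mo.degree (f i)) N.det = (∏ i, mo.leadingCoeff (f i)) * E.det := by
    simp only [coeff_sum_det_of_degree_le mo hdeg, ← Matrix.det_mul_column, hcoeff, E,
      MonomialOrder.leadingCoeff, Matrix.of_apply, mul_comm (coeff _ _)]
  have hN0 : N.det ≠ 0 := ne_zero_iff.2 ⟨_, hN ▸ mul_ne_zero
    (Finset.prod_ne_zero_iff.2 fun i _ => mo.leadingCoeff_ne_zero_iff.2 (hf0 i))
    (det_descFactorial_mul_descFactorial_ne_zero hinj₁ hexp)⟩
  rw [Matrix.det_mul_row] at hN0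
  exact right_ne_zero_of_mul hN0

theorem det_osculatingMatrix_ne_zero {K : Type*} [Field K] [CharZero K] {n d : ℕ}
    {p : Fin (n + 1) → MvPolynomial (Fin 2) K} (hp : ∀ i, (p i).IsHomogeneous d)
    (hpli : LinearIndependent K p) : (osculatingMatrix p).det ≠ 0 := by
  have hrank : n + 1 ≤ Module.finrank K (Submodule.span K (Set.range p)) := by
    simp [finrank_span_eq_card hpli]
  have hspan : Submodule.span K (Set.range p) ≤ homogeneousSubmodule (Fin 2) K d :=
    Submodule.span_le.2 (Set.range_subset_iff.2 hp)
  obtain ⟨f, hfV, hf0, hinj⟩ := exists_injective_degree_of_le_finrank MonomialOrder.lex hrank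
  choose c hc using fun i => (Submodule.mem_span_range_iff_exists_fun K).1 (hfV i)
  have hfac : osculatingMatrix f = (Matrix.of c).map C * osculatingMatrix p := by
    rw [← osculatingMatrix_sum_smul]
    exact congrArg osculatingMatrix (funext fun i => (hc i).symm)
  have hdet := det_osculatingMatrix_ne_zero_of_injective_degree MonomialOrder.lex
    (fun i => hspan (hfV i)) hf0 hinj
  rw [hfac, Matrix.det_mul] at hdet
  exact right_ne_zero_of_mul hdet

end OsculatingMatrix

theorem finite_setOf_eval_rep_eq_zero {K : Type*} [Field K] {f : MvPolynomial (Fin 2) K} {d : ℕ}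
    (hf : f.IsHomogeneous d) (hf0 : f ≠ 0) :
    {x : Projectivization K (Fin 2 → K) | eval x.rep f = 0}.Finite := by
  classical
  let g : Polynomial K := aeval ![Polynomial.X, 1] f
  have hgf : g.homogenize d = f := Polynomial.homogenize_eq_of_isHomogeneous hf rfl
  have hg0 : g ≠ 0 := fun h => hf0 (by rw [← hgf, h, Polynomial.homogenize_zero])
  have hgd : g.natDegree ≤ d := by
    simpa using aeval_natDegree_le f hf.totalDegree_le ![Polynomial.X, 1] (n := 1)
      (Fin.forall_fin_two.2 (by simp))
  have hfin : (insert OnePoint.infty ((↑) '' g.rootSet K : Set (OnePoint K))).Finite :=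
    ((g.rootSet_finite K).image _).insert _
  refine (hfin.image (OnePoint.equivProjectivization K)).subset fun x hx => ?_
  rw [← OnePoint.equivProjectivization K |>.apply_symm_apply x]
  refine Set.mem_image_of_mem _ ?_
  rw [← x.mk_rep, OnePoint.equivProjectivization_symm_apply_mk]
  split_ifs with h
  · exact Set.mem_insert _ _
  · refine Set.mem_insert_of_mem _ (Set.mem_image_of_mem _ (Polynomial.mem_rootSet.2 ⟨hg0, ?_⟩))
    have hgx : g.eval (x.rep 0 / x.rep 1) * x.rep 1 ^ d = 0 := by
      rw [← Polynomial.eval_homogenize hgd x.rep h, hgf]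
      exact hx
    rw [inv_mul_eq_div, Polynomial.coe_aeval_eq_eval]
    exact (mul_eq_zero.1 hgx).resolve_right (pow_ne_zero d h)

theorem oscDet_ne_zero_isHomogeneous_general {K : Type*} [Field K] [CharZero K] {n d : ℕ}
    {p : Fin (n + 1) → MvPolynomial (Fin 2) K} (hp : ∀ i, (p i).IsHomogeneous d)
    (hpli : LinearIndependent K p) :
    (osculatingMatrix p).det ≠ 0 ∧ (osculatingMatrix p).det.IsHomogeneous ((d - n) * (n + 1)) ∧
      {x : Projectivization K (Fin 2 → K) | eval x.rep (osculatingMatrix p).det = 0}.Finite := by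
  have hne := det_osculatingMatrix_ne_zero hp hpli
  have hhom := isHomogeneous_det_osculatingMatrix hp
  exact ⟨hne, hhom, finite_setOf_eval_rep_eq_zero hhom hne⟩

/-- For a non-degenerate rational curve of degree `d > n` in `ℙⁿ`,
parameterized by binary forms `p₀, …, pₙ` of degree `d` without common factor and
linearly independent over `ℂ`, the osculating determinant `Δ_p` is a nonzero homogeneous
form of degree `(d−n)(n+1)`; in particular there are only finitely many stall points. -/
theorem oscDet_ne_zero_isHomogeneous (n d : ℕ) (hd : n < d)
    (p : Fin (n + 1) → MvPolynomial (Fin 2) ℂ)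
    (hp : ∀ i, (p i).IsHomogeneous d)
    (hpgcd : ∀ r : MvPolynomial (Fin 2) ℂ, (∀ i, r ∣ p i) → IsUnit r)
    (hpli : LinearIndependent ℂ p) :
    oscDet n p ≠ 0 ∧ (oscDet n p).IsHomogeneous ((d - n) * (n + 1)) ∧
      {x : P1 | MvPolynomial.eval x.rep (oscDet n p) = 0}.Finite := by
  rw [oscDet_eq_det_osculatingMatrix]
  exact oscDet_ne_zero_isHomogeneous_general hp hpli
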